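/- (Corollary 5.7.) Let (K, v) be a matrix-configuration with K supported on an edge set E. Let I ⊆ Fin N with |I| = k be such that the vectors v i for i ∈ I form a basis of ℂ^k. Suppose g : Fin M → Fin N is an injective map whose range is the complement of I, satisfying (b, g b) ∈ E for every b, and suppose g is the unique such map: every injective f : Fin M → Fin N with range equal to the complement of I and (b, f b) ∈ E for all b equals g. Then K b (g b) ≠ 0 for every b : Fin M. -/

import Mathlib

/-!
A vector in the row space of `K` that vanishes outside `I` is a linear relation among the
independent vectors `v i`, `i ∈ I`, hence zero. So the rows of `K` stay linearly independent when
restricted to the columns outside `I`, and the square submatrix on the columns `g b` is nonsingular.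
The nonzero terms in the Leibniz expansion of its determinant correspond to matchings onto the
complement of `I`; only the term `∏ b, K b (g b)` of `g` is left, so no factor of it can vanish.
-/

open scoped nonZeroDivisors

theorem linearIndependent_row_iff_rank_eq_card {m n F : Type*} [Fintype m] [Fintype n] [Field F]
    {K : Matrix m n F} : LinearIndependent F K.row ↔ K.rank = Fintype.card m := by
  rw [linearIndependent_iff_card_eq_finrank_span, K.rank_eq_finrank_span_row, Set.finrank, eq_comm]

section Relations

variable {n R V : Type*} [Fintype n] [Ring R] [AddCommGroup V] [Module R V]
  {v : n → V} {I : Set n}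

theorem eq_zero_of_sum_smul_eq_zero_of_linearIndepOn (hv : LinearIndepOn R v I) {x : n → R}
    (hx : ∑ w, x w • v w = 0) (hxI : ∀ w ∉ I, x w = 0) : x = 0 := by
  let e := Finsupp.linearEquivFunOnFinite R R n
  have hsupp : e.symm x ∈ Finsupp.supported R R I := (Finsupp.mem_supported' R _).mpr hxI
  have hsum : Finsupp.linearCombination R v (e.symm x) = 0 := by
    rw [Finsupp.linearCombination_eq_fintype_linearCombination_apply R]
    exact hx
  exact e.symm.map_eq_zero_iff.mp (linearIndepOn_iff.mp hv _ hsupp hsum)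

theorem linearIndependent_row_submatrix_of_relations {m l : Type*} {K : Matrix m n R} {g : l → n}
    (hK : LinearIndependent R K.row) (hrel : ∀ b, ∑ w, K b w • v w = 0)
    (hv : LinearIndepOn R v I) (hg : Iᶜ ⊆ Set.range g) :
    LinearIndependent R (K.submatrix id g).row := by
  have hrow : Submodule.span R (Set.range K.row) ≤ (Fintype.linearCombination R v).ker :=
    Submodule.span_le.mpr (Set.range_subset_iff.mpr hrel)
  refine hK.map (f := LinearMap.funLeft R R g) (Submodule.disjoint_def.mpr fun x hx hxg => ?_)
  refine eq_zero_of_sum_smul_eq_zero_of_linearIndepOn hv (hrow hx) fun w hw => ?_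
  obtain ⟨b, rfl⟩ := hg hw
  exact congrFun hxg b

end Relations

theorem det_eq_prod_diag_of_unique_perm {n R : Type*} [Fintype n] [DecidableEq n] [CommRing R]
    {A : Matrix n n R} (hA : ∀ σ : Equiv.Perm n, (∀ i, A (σ i) i ≠ 0) → σ = 1) :
    A.det = ∏ i, A i i := by
  rw [Matrix.det_apply, Finset.sum_eq_single_of_mem 1 (Finset.mem_univ _)]
  · simp only [Equiv.Perm.sign_one, Equiv.Perm.one_apply, one_smul]
  · intro σ _ hσ
    obtain ⟨i, hi⟩ : ∃ i, A (σ i) i = 0 := by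
      by_contra! hne
      exact hσ (hA σ hne)
    have hprod : ∏ j, A (σ j) j = 0 := Finset.prod_eq_zero (Finset.mem_univ i) hi
    rw [hprod, smul_zero]

theorem perm_eq_one_of_unique_matching {α β : Type*} {r : α → β → Prop} {g : α → β}
    (hg : Function.Injective g)
    (huniq : ∀ f : α → β, Function.Injective f → Set.range f = Set.range g →
      (∀ a, r a (f a)) → f = g)
    {σ : Equiv.Perm α} (hσ : ∀ a, r (σ a) (g a)) : σ = 1 := by
  have hgσ : g ∘ σ.symm = g :=
    huniq _ (hg.comp σ.symm.injective) (σ.symm.surjective.range_comp g) fun a => by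
      simpa only [Function.comp_apply, Equiv.apply_symm_apply] using hσ (σ.symm a)
  ext a
  exact (Equiv.symm_apply_eq σ).mp (hg (congrFun hgσ a)) |>.symm

theorem coeff_nonzero_along_unique_matching_general {m n R V : Type*} [Fintype n] [CommRing R]
    [AddCommGroup V] [Module R V] {K : Matrix m n R} {v : n → V}
    (hK : LinearIndependent R K.row) (hrel : ∀ b, ∑ w, K b w • v w = 0)
    {I : Set n} (hv : LinearIndepOn R v I) {g : m → n} (hg : Function.Injective g)
    (hgrange : Set.range g = Iᶜ)
    (huniq : ∀ f : m → n, Function.Injective f → Set.range f = Iᶜ →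
      (∀ b, K b (f b) ≠ 0) → f = g) (b : m) :
    K b (g b) ∈ R⁰ := by
  classical
  have := Finite.of_injective g hg
  have := Fintype.ofFinite m
  have hdet : (K.submatrix id g).det ∈ R⁰ :=
    Matrix.nonsingular_iff_det_mem_nonZeroDivisors.mp <| .of_linearIndependent_row <|
      linearIndependent_row_submatrix_of_relations hK hrel hv hgrange.ge
  have hprod : (K.submatrix id g).det = ∏ a, K a (g a) :=
    det_eq_prod_diag_of_unique_perm fun σ hσ =>
      perm_eq_one_of_unique_matching (r := fun a w => K a w ≠ 0) hg (hgrange ▸ huniq) hσ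
  rw [hprod, ← Finset.mul_prod_erase _ _ (Finset.mem_univ b)] at hdet
  exact (mul_mem_nonZeroDivisors.mp hdet).1

/-- **Corollary 5.7.** Let `(K, v)` be a matrix-configuration supported on `E`, let `I`
be a `k`-element set of white vertices whose vectors form a basis of `ℂ^k`, and let `g`
be the unique almost perfect matching of the black vertices with the white vertices
outside `I`. Then every coefficient `K b (g b)` along the matching is nonzero. -/
theorem coeff_nonzero_along_unique_matching
    (k M : ℕ) (K : Matrix (Fin M) (Fin (M + k)) ℂ) (v : Fin (M + k) → Fin k → ℂ)
    (hrank : K.rank = M)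
    (hrel : ∀ b : Fin M, ∑ w, K b w • v w = 0)
    (hspan : Submodule.span ℂ (Set.range v) = ⊤)
    (E : Set (Fin M × Fin (M + k)))
    (hsupp : ∀ b w, (b, w) ∉ E → K b w = 0)
    (I : Finset (Fin (M + k))) (hI : I.card = k)
    (hind : LinearIndependent ℂ (fun i : {i : Fin (M + k) // i ∈ I} => v i))
    (hbspan : Submodule.span ℂ (v '' ↑I) = ⊤)
    (g : Fin M → Fin (M + k))
    (hginj : Function.Injective g)
    (hgrange : Set.range g = {w : Fin (M + k) | w ∉ I})
    (hgE : ∀ b, (b, g b) ∈ E)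
    (huniq : ∀ f : Fin M → Fin (M + k), Function.Injective f →
      Set.range f = {w : Fin (M + k) | w ∉ I} → (∀ b, (b, f b) ∈ E) → f = g) :
    ∀ b : Fin M, K b (g b) ≠ 0 := by
  have hK := linearIndependent_row_iff_rank_eq_card.mpr (hrank.trans (Fintype.card_fin M).symm)
  exact fun b => nonZeroDivisors.ne_zero <|
    coeff_nonzero_along_unique_matching_general hK hrel (I := ↑I) hind hginj hgrange
      (fun f hf hfI hfK => huniq f hf hfI fun a => not_imp_comm.mp (hsupp a _) (hfK a)) b
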